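/- Let p = 2 and 0 ≤ α ≤ β ≤ 1. Then dim_H B(α,β) = sup_{α ≤ t ≤ β} h_2(t), where h_2(t) = (−t log t − (1−t) log(1−t))/log 2 (with 0 log 0 = 0). In particular, for 0 ≤ α ≤ 1, dim_H B(α) = h_2(α), where B(α) = B(α,α). -/

import Mathlib

open Filter MeasureTheory Set
open scoped ENNReal

noncomputable section

/-- Number of words of length `n` over the alphabet `{0, …, p-1}` whose digit sum lies
strictly between `n(α-δ)` and `n(α+δ)`; this is `h(α,n,δ)`. -/
def hcount (p n : ℕ) (α δ : ℝ) : ℕ :=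
  Nat.card {w : Fin n → Fin p //
    (n : ℝ) * (α - δ) < ∑ i, ((w i : ℕ) : ℝ) ∧ (∑ i, ((w i : ℕ) : ℝ)) < n * (α + δ)}

/-- The `p`-adic entropy function
`h(α) = lim_{δ→0} limsup_{n→∞} log h(α,n,δ) / (n log p)`.
Since the inner quantity is nondecreasing in `δ`, the limit as `δ → 0⁺` equals the
infimum over `δ > 0`. -/
def entropy (p : ℕ) (α : ℝ) : ℝ :=
  ⨅ δ : {δ : ℝ // 0 < δ},
    limsup (fun n : ℕ => Real.log (hcount p n α δ) / (n * Real.log p)) atTop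

/-- Number of words of length `n` over `{0, …, p-1}` with digit sum `< n(α+δ)`;
this is `h̄(α,n,δ)`. -/
def hbarCount (p n : ℕ) (α δ : ℝ) : ℕ :=
  Nat.card {w : Fin n → Fin p // (∑ i, ((w i : ℕ) : ℝ)) < n * (α + δ)}

/-- The `p`-adic upper entropy function
`h̄(α) = lim_{δ→0} limsup_{n→∞} log h̄(α,n,δ) / (n log p)`, the limit in `δ`
being the infimum over `δ > 0` by monotonicity in `δ`. -/
def upperEntropy (p : ℕ) (α : ℝ) : ℝ :=
  ⨅ δ : {δ : ℝ // 0 < δ},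
    limsup (fun n : ℕ => Real.log (hbarCount p n α δ) / (n * Real.log p)) atTop

/-- Number of words of length `n` over `{0, …, p-1}` with digit sum `> n(α-δ)`;
this is `h̲(α,n,δ)`. -/
def hlowCount (p n : ℕ) (α δ : ℝ) : ℕ :=
  Nat.card {w : Fin n → Fin p // (n : ℝ) * (α - δ) < ∑ i, ((w i : ℕ) : ℝ)}

/-- The `p`-adic lower entropy function
`h̲(α) = lim_{δ→0} liminf_{n→∞} log h̲(α,n,δ) / (n log p)`, the limit in `δ`
being the infimum over `δ > 0` by monotonicity in `δ`. -/
def lowerEntropy (p : ℕ) (α : ℝ) : ℝ :=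
  ⨅ δ : {δ : ℝ // 0 < δ},
    liminf (fun n : ℕ => Real.log (hlowCount p n α δ) / (n * Real.log p)) atTop

/-- The `(n+1)`-th digit `x_{n+1} ∈ {0,…,p-1}` of the non-terminating `p`-adic expansion
`x = 0.x₁x₂x₃…` of `x ∈ [0,1]` (the expansion not ending in all zeros). -/
def padicDigit (p : ℕ) (x : ℝ) (n : ℕ) : ℤ :=
  (⌈x * p ^ (n + 1)⌉ - 1) - p * (⌈x * p ^ n⌉ - 1)

/-- `S_n(T^m x) = x_{m+1} + ⋯ + x_{m+n}`, the digit sum of length `n` after shifting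
`m` times. In particular `msum p x 0 n = S_n(x)`. -/
def msum (p : ℕ) (x : ℝ) (m n : ℕ) : ℤ :=
  ∑ i ∈ Finset.range n, padicDigit p x (m + i)

/-- The `n`-th lower moving digit mean `M̲ₙ(x) = liminf_{m→∞} S_n(T^m x)/n`. -/
def lowerMn (p : ℕ) (x : ℝ) (n : ℕ) : ℝ :=
  liminf (fun m : ℕ => (msum p x m n : ℝ) / n) atTop

/-- The `n`-th upper moving digit mean `M̄ₙ(x) = limsup_{m→∞} S_n(T^m x)/n`. -/
def upperMn (p : ℕ) (x : ℝ) (n : ℕ) : ℝ :=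
  limsup (fun m : ℕ => (msum p x m n : ℝ) / n) atTop

/-- The lower moving digit mean `M̲(x) = lim_{n→∞} M̲ₙ(x)`; the limit exists by
subadditivity, hence equals the `liminf`. -/
def lowerM (p : ℕ) (x : ℝ) : ℝ := liminf (fun n : ℕ => lowerMn p x n) atTop

/-- The upper moving digit mean `M̄(x) = lim_{n→∞} M̄ₙ(x)`; the limit exists by
subadditivity, hence equals the `limsup`. -/
def upperM (p : ℕ) (x : ℝ) : ℝ := limsup (fun n : ℕ => upperMn p x n) atTop

/-- The lower digit mean `A̲(x) = liminf_{n→∞} S_n(x)/n`. -/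
def lowerA (p : ℕ) (x : ℝ) : ℝ := liminf (fun n : ℕ => (msum p x 0 n : ℝ) / n) atTop

/-- The upper digit mean `Ā(x) = limsup_{n→∞} S_n(x)/n`. -/
def upperA (p : ℕ) (x : ℝ) : ℝ := limsup (fun n : ℕ => (msum p x 0 n : ℝ) / n) atTop

/-- The Banach set `B(α,β) = {x ∈ [0,1] : M̲(x) = α, M̄(x) = β}`. -/
def BanachSet (p : ℕ) (α β : ℝ) : Set ℝ :=
  {x | x ∈ Icc (0 : ℝ) 1 ∧ lowerM p x = α ∧ upperM p x = β}

/-- The explicit binary entropy function `h₂(t) = (-t log t - (1-t) log(1-t))/log 2`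
(with the convention `0 log 0 = 0`, which holds since `Real.log 0 = 0`). -/
def binEntropy (t : ℝ) : ℝ :=
  (-t * Real.log t - (1 - t) * Real.log (1 - t)) / Real.log 2

lemma padicDigit_two_mem (x : ℝ) (n : ℕ) : padicDigit 2 x n = 0 ∨ padicDigit 2 x n = 1 := by
  have hy : x * ((2 : ℕ) : ℝ) ^ (n + 1) = 2 * (x * ((2 : ℕ) : ℝ) ^ n) := by ring
  rw [padicDigit, hy]
  generalize x * ((2 : ℕ) : ℝ) ^ n = y
  have h1 : ⌈2 * y⌉ ≤ 2 * ⌈y⌉ := by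
    rw [Int.ceil_le]; push_cast; linarith [Int.le_ceil y]
  have h2 : 2 * ⌈y⌉ - 2 < ⌈2 * y⌉ := by
    rw [Int.lt_ceil]; push_cast; linarith [Int.ceil_lt_add_one y]
  push_cast
  omega

lemma padicDigit_two_nonneg (x : ℝ) (n : ℕ) : (0 : ℝ) ≤ padicDigit 2 x n := by
  rcases padicDigit_two_mem x n with h | h <;> simp [h]

lemma padicDigit_two_le_one (x : ℝ) (n : ℕ) : (padicDigit 2 x n : ℝ) ≤ 1 := by
  rcases padicDigit_two_mem x n with h | h <;> simp [h]

lemma msum_eq_sub (p : ℕ) (x : ℝ) (m n : ℕ) :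
    msum p x m n = msum p x 0 (m + n) - msum p x 0 m := by
  simp [msum, Finset.sum_range_add]

lemma msum_two_nonneg (x : ℝ) (m n : ℕ) : (0 : ℝ) ≤ msum 2 x m n := by
  rw [msum]
  push_cast
  exact Finset.sum_nonneg fun i _ => padicDigit_two_nonneg x _

lemma msum_two_le (x : ℝ) (m n : ℕ) : (msum 2 x m n : ℝ) ≤ n := by
  rw [msum]
  push_cast
  simpa using Finset.sum_le_card_nsmul (Finset.range n) _ (1 : ℝ)
    fun i _ => padicDigit_two_le_one x (m + i)

/-- The integer formed by the first `n` digits is determined by these digits. -/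
lemma ceil_eq_of_padicDigit_eq {x y : ℝ} (h0 : ⌈x⌉ = ⌈y⌉) {n : ℕ}
    (h : ∀ i < n, padicDigit 2 x i = padicDigit 2 y i) :
    ⌈x * ((2 : ℕ) : ℝ) ^ n⌉ = ⌈y * ((2 : ℕ) : ℝ) ^ n⌉ := by
  induction n with
  | zero => simpa using h0
  | succ n ih =>
    have h1 := ih fun i hi => h i (by omega)
    have h2 := h n (by omega)
    simp only [padicDigit] at h2
    rw [h1] at h2
    omega

lemma abs_sub_le_of_padicDigit_eq {x y : ℝ} (h0 : ⌈x⌉ = ⌈y⌉) {n : ℕ}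
    (h : ∀ i < n, padicDigit 2 x i = padicDigit 2 y i) : |x - y| ≤ (1 / 2) ^ n := by
  have hc := ceil_eq_of_padicDigit_eq h0 h
  push_cast at hc
  have h1 := Int.le_ceil (x * (2 : ℝ) ^ n)
  have h2 := Int.ceil_lt_add_one (x * (2 : ℝ) ^ n)
  have h3 := Int.le_ceil (y * (2 : ℝ) ^ n)
  have h4 := Int.ceil_lt_add_one (y * (2 : ℝ) ^ n)
  rw [hc] at h1 h2
  have h5 : |x - y| * 2 ^ n ≤ 1 := by
    rw [← abs_of_pos (show (0 : ℝ) < 2 ^ n by positivity), ← abs_mul, abs_le]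
    constructor <;> nlinarith
  rw [one_div, inv_pow, ← one_div, le_div_iff₀ (by positivity)]
  exact h5

lemma binEntropy_eq_div (t : ℝ) : binEntropy t = Real.binEntropy t / Real.log 2 := by
  simp only [binEntropy, Real.binEntropy, Real.log_inv]
  ring

lemma binEntropy_nonneg_of_mem {t : ℝ} (h0 : 0 ≤ t) (h1 : t ≤ 1) : 0 ≤ binEntropy t := by
  rw [binEntropy_eq_div]
  exact div_nonneg (Real.binEntropy_nonneg h0 h1) (Real.log_nonneg (by norm_num))

lemma continuous_binEntropy : Continuous binEntropy := by
  rw [show binEntropy = fun t => Real.binEntropy t / Real.log 2 from funext binEntropy_eq_div]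
  fun_prop

lemma binEntropy_le_one (t : ℝ) : binEntropy t ≤ 1 := by
  rw [binEntropy_eq_div, div_le_one (Real.log_pos (by norm_num))]
  exact Real.binEntropy_le_log_two

lemma binEntropy_half : binEntropy (1 / 2) = 1 := by
  rw [binEntropy_eq_div, one_div, Real.binEntropy_two_inv, div_self]
  exact (Real.log_pos (by norm_num)).ne'

lemma half_pow_rpow_binEntropy_le {t : ℝ} (h0 : 0 < t) (h1 : t < 1) {n k : ℕ} (hk : k ≤ n)
    (h : 0 ≤ ((k : ℝ) - n * t) * (Real.log t - Real.log (1 - t))) :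
    (((1 : ℝ) / 2) ^ n) ^ binEntropy t ≤ t ^ k * (1 - t) ^ (n - k) := by
  have h1' : 0 < 1 - t := by linarith
  have hl : 0 < Real.log 2 := Real.log_pos (by norm_num)
  rw [← Real.log_le_log_iff (by positivity) (by positivity), Real.log_rpow (by positivity),
    Real.log_pow, Real.log_mul (by positivity) (by positivity), Real.log_pow, Real.log_pow,
    one_div, Real.log_inv, Nat.cast_sub hk, binEntropy]
  rw [div_mul_eq_mul_div, div_le_iff₀ hl]
  nlinarith [mul_nonneg hl.le h]

/-- The set of points whose digit means eventually lie on the side of `t` away from `1 / 2`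
has dimension at most the entropy of `t`. -/
lemma dimH_le_binEntropy {t : ℝ} (h0 : 0 < t) (h1 : t < 1) (N : ℕ) :
    dimH {x : ℝ | x ∈ Ioc 0 1 ∧ ∀ n ≥ N,
      0 ≤ ((msum 2 x 0 n : ℝ) - n * t) * (Real.log t - Real.log (1 - t))} ≤
      ENNReal.ofReal (binEntropy t) := by
  classical
  have h1' : 0 < 1 - t := by linarith
  have hs : 0 ≤ binEntropy t := binEntropy_nonneg_of_mem h0.le h1.le
  set E := {x : ℝ | x ∈ Ioc 0 1 ∧ ∀ n ≥ N,
      0 ≤ ((msum 2 x 0 n : ℝ) - n * t) * (Real.log t - Real.log (1 - t))} with hE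
  let I : ∀ n : ℕ, {A : Finset (Fin n) //
      0 ≤ ((A.card : ℝ) - n * t) * (Real.log t - Real.log (1 - t))} → Set ℝ :=
    fun n A => {x | x ∈ Ioc 0 1 ∧ ∀ i : Fin n, padicDigit 2 x i = 1 ↔ i ∈ A.1}
  have hdiam : ∀ n A, Metric.ediam (I n A) ≤ ENNReal.ofReal ((1 / 2) ^ n) := by
    intro n A
    refine Metric.ediam_le fun x hx y hy => ?_
    rw [edist_dist, Real.dist_eq]
    refine ENNReal.ofReal_le_ofReal (abs_sub_le_of_padicDigit_eq ?_ fun i hi => ?_)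
    · rw [(Int.ceil_eq_iff (a := x) (z := 1)).2 (by simpa using hx.1),
        (Int.ceil_eq_iff (a := y) (z := 1)).2 (by simpa using hy.1)]
    · have hx2 := hx.2 ⟨i, hi⟩
      have hy2 := hy.2 ⟨i, hi⟩
      rcases padicDigit_two_mem x i with h | h <;> rcases padicDigit_two_mem y i with h' | h' <;>
        simp_all
  have hcov : ∀ n ≥ N, E ⊆ ⋃ A, I n A := by
    intro n hn x hx
    have hcard : ((Finset.univ.filter fun i : Fin n => padicDigit 2 x i = 1).card : ℝ) =
        msum 2 x 0 n := by
      rw [msum, Finset.card_filter, Finset.sum_range]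
      push_cast
      refine Finset.sum_congr rfl fun i _ => ?_
      rcases padicDigit_two_mem x i with h | h <;> simp [h]
    refine mem_iUnion.2 ⟨⟨Finset.univ.filter fun i : Fin n => padicDigit 2 x i = 1, ?_⟩, hx.1, ?_⟩
    · rw [hcard]; exact hx.2 n hn
    · simp
  have hsum : ∀ n, ∑ A, Metric.ediam (I n A) ^ binEntropy t ≤ 1 := by
    intro n
    calc ∑ A, Metric.ediam (I n A) ^ binEntropy t
        ≤ ∑ A : {A : Finset (Fin n) //
            0 ≤ ((A.card : ℝ) - n * t) * (Real.log t - Real.log (1 - t))},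
            ENNReal.ofReal (t ^ A.1.card * (1 - t) ^ (n - A.1.card)) := by
          refine Finset.sum_le_sum fun A _ => ?_
          refine (ENNReal.rpow_le_rpow (hdiam n A) hs).trans ?_
          rw [ENNReal.ofReal_rpow_of_pos (by positivity)]
          refine ENNReal.ofReal_le_ofReal (half_pow_rpow_binEntropy_le h0 h1 ?_ A.2)
          simpa using Finset.card_le_univ A.1
      _ = ENNReal.ofReal (∑ A : {A : Finset (Fin n) //
            0 ≤ ((A.card : ℝ) - n * t) * (Real.log t - Real.log (1 - t))},
            t ^ A.1.card * (1 - t) ^ (n - A.1.card)) :=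
          (ENNReal.ofReal_sum_of_nonneg fun A _ => by positivity).symm
      _ ≤ ENNReal.ofReal 1 := by
          refine ENNReal.ofReal_le_ofReal ?_
          have h2 := Fin.sum_pow_mul_eq_add_pow (n := n) t (1 - t)
          rw [add_sub_cancel, one_pow] at h2
          refine le_trans ?_ h2.le
          rw [← Fintype.sum_subtype_add_sum_subtype (fun A : Finset (Fin n) =>
            0 ≤ ((A.card : ℝ) - n * t) * (Real.log t - Real.log (1 - t)))]
          exact le_add_of_nonneg_right (Finset.sum_nonneg fun A _ => by positivity)
      _ = 1 := ENNReal.ofReal_one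
  have hμ := Measure.hausdorffMeasure_le_liminf_sum (binEntropy t) E
    (fun n : ℕ => ENNReal.ofReal ((1 / 2) ^ n)) (l := atTop) (by
      rw [← ENNReal.ofReal_zero]
      exact ENNReal.tendsto_ofReal (tendsto_pow_atTop_nhds_zero_of_lt_one (by norm_num)
        (by norm_num))) I (Eventually.of_forall hdiam)
    (eventually_atTop.2 ⟨N, hcov⟩)
  rw [ENNReal.ofReal]
  refine dimH_le_of_hausdorffMeasure_ne_top ?_
  rw [Real.coe_toNNReal _ hs]
  refine ne_top_of_le_ne_top ENNReal.one_ne_top (hμ.trans ?_)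
  exact (liminf_le_liminf (Eventually.of_forall hsum)).trans (by simp)

lemma exists_upper_bound_of_add_le {Q : ℕ → ℝ} {n m₀ : ℕ} (hn : 0 < n)
    (h : ∀ m ≥ m₀, Q (m + n) ≤ Q m) : ∃ C, ∀ N, Q N ≤ C := by
  obtain ⟨C, hC⟩ := ((Finset.range (m₀ + n)).image Q).exists_le
  refine ⟨C, fun N => ?_⟩
  induction N using Nat.strong_induction_on with
  | _ N ih =>
    by_cases hN : N < m₀ + n
    · exact hC _ (Finset.mem_image_of_mem _ (Finset.mem_range.2 hN))
    · have h1 := h (N - n) (by omega)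
      rw [Nat.sub_add_cancel (by omega)] at h1
      exact h1.trans (ih (N - n) (by omega))

lemma msum_div_mem (x : ℝ) (m n : ℕ) : (msum 2 x m n : ℝ) / n ∈ Icc (0 : ℝ) 1 :=
  ⟨div_nonneg (msum_two_nonneg x m n) n.cast_nonneg,
    div_le_one_of_le₀ (msum_two_le x m n) n.cast_nonneg⟩

lemma isBoundedUnder_le_of_mem {u : ℕ → ℝ} (h : ∀ n, u n ∈ Icc (0 : ℝ) 1) :
    IsBoundedUnder (· ≤ ·) atTop u := isBoundedUnder_of ⟨1, fun n => (h n).2⟩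

lemma isBoundedUnder_ge_of_mem {u : ℕ → ℝ} (h : ∀ n, u n ∈ Icc (0 : ℝ) 1) :
    IsBoundedUnder (· ≥ ·) atTop u := isBoundedUnder_of ⟨0, fun n => (h n).1⟩

lemma upperMn_mem (x : ℝ) (n : ℕ) : upperMn 2 x n ∈ Icc (0 : ℝ) 1 := by
  have h := fun m => msum_div_mem x m n
  exact ⟨le_limsup_of_frequently_le (Frequently.of_forall fun m => (h m).1)
      (isBoundedUnder_le_of_mem h),
    limsup_le_of_le (isBoundedUnder_ge_of_mem h).isCoboundedUnder_le
      (Eventually.of_forall fun m => (h m).2)⟩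

lemma lowerMn_mem (x : ℝ) (n : ℕ) : lowerMn 2 x n ∈ Icc (0 : ℝ) 1 := by
  have h := fun m => msum_div_mem x m n
  exact ⟨le_liminf_of_le (isBoundedUnder_le_of_mem h).isCoboundedUnder_ge
      (Eventually.of_forall fun m => (h m).1),
    liminf_le_of_frequently_le (Frequently.of_forall fun m => (h m).2)
      (isBoundedUnder_ge_of_mem h)⟩

lemma exists_msum_le_of_upperM_lt {x t : ℝ} (h : upperM 2 x < t) :
    ∃ N, ∀ n ≥ N, (msum 2 x 0 n : ℝ) ≤ n * t := by
  obtain ⟨s, hs, hst⟩ := exists_between h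
  obtain ⟨n, hn, hn0⟩ := ((eventually_lt_of_limsup_lt hs
    (isBoundedUnder_le_of_mem (upperMn_mem x))).and (eventually_gt_atTop 0)).exists
  obtain ⟨m₀, hm₀⟩ := eventually_atTop.1 (eventually_lt_of_limsup_lt hn
    (isBoundedUnder_le_of_mem fun m => msum_div_mem x m n))
  have hn' : (0 : ℝ) < n := by exact_mod_cast hn0
  obtain ⟨C, hC⟩ := exists_upper_bound_of_add_le (Q := fun m => (msum 2 x 0 m : ℝ) - m * s)
    (m₀ := m₀) hn0 fun m hm => by
      have h1 := hm₀ m hm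
      rw [div_lt_iff₀ hn', msum_eq_sub] at h1
      push_cast at h1 ⊢
      linarith
  obtain ⟨N, hN⟩ := exists_nat_ge (C / (t - s))
  refine ⟨N, fun k hk => ?_⟩
  rw [div_le_iff₀ (by linarith)] at hN
  have h1 : (N : ℝ) ≤ k := by exact_mod_cast hk
  have h2 := hC k
  nlinarith

lemma exists_le_msum_of_lt_lowerM {x t : ℝ} (h : t < lowerM 2 x) :
    ∃ N, ∀ n ≥ N, n * t ≤ (msum 2 x 0 n : ℝ) := by
  obtain ⟨s, hst, hs⟩ := exists_between h
  obtain ⟨n, hn, hn0⟩ := ((eventually_lt_of_lt_liminf hs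
    (isBoundedUnder_ge_of_mem (lowerMn_mem x))).and (eventually_gt_atTop 0)).exists
  obtain ⟨m₀, hm₀⟩ := eventually_atTop.1 (eventually_lt_of_lt_liminf hn
    (isBoundedUnder_ge_of_mem fun m => msum_div_mem x m n))
  have hn' : (0 : ℝ) < n := by exact_mod_cast hn0
  obtain ⟨C, hC⟩ := exists_upper_bound_of_add_le (Q := fun m => m * s - (msum 2 x 0 m : ℝ))
    (m₀ := m₀) hn0 fun m hm => by
      have h1 := hm₀ m hm
      rw [lt_div_iff₀ hn', msum_eq_sub] at h1
      push_cast at h1 ⊢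
      linarith
  obtain ⟨N, hN⟩ := exists_nat_ge (C / (s - t))
  refine ⟨N, fun k hk => ?_⟩
  rw [div_le_iff₀ (by linarith)] at hN
  have h1 : (N : ℝ) ≤ k := by exact_mod_cast hk
  have h2 := hC k
  nlinarith

lemma dimH_le_of_forall_exists {s : Set ℝ} {t : ℝ} (h0 : 0 < t) (h1 : t < 1) (hs : s ⊆ Icc 0 1)
    (h : ∀ x ∈ s, ∃ N, ∀ n ≥ N,
      0 ≤ ((msum 2 x 0 n : ℝ) - n * t) * (Real.log t - Real.log (1 - t))) :
    dimH s ≤ ENNReal.ofReal (binEntropy t) := by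
  refine (dimH_mono (t := {0} ∪ ⋃ N : ℕ, {x : ℝ | x ∈ Ioc 0 1 ∧ ∀ n ≥ N,
      0 ≤ ((msum 2 x 0 n : ℝ) - n * t) * (Real.log t - Real.log (1 - t))}) ?_).trans ?_
  · intro x hx
    rcases (hs hx).1.eq_or_lt with h2 | h2
    · exact Or.inl h2.symm
    · obtain ⟨N, hN⟩ := h x hx
      exact Or.inr (mem_iUnion.2 ⟨N, ⟨h2, (hs hx).2⟩, hN⟩)
  · rw [dimH_union, dimH_singleton, dimH_iUnion]
    exact max_le zero_le (iSup_le fun N => dimH_le_binEntropy h0 h1 N)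

lemma exists_dimH_BanachSet_two_le {α β : ℝ} (hα : 0 ≤ α) (hαβ : α ≤ β) (hβ : β ≤ 1) :
    ∃ t ∈ Icc α β, dimH (BanachSet 2 α β) ≤ ENNReal.ofReal (binEntropy t) := by
  have hsub : BanachSet 2 α β ⊆ Icc 0 1 := fun x hx => hx.1
  have hlim : ∀ (a : ℝ) (l : Filter ℝ), l ≤ nhds a → 
      Tendsto (fun t => ENNReal.ofReal (binEntropy t)) l (nhds (ENNReal.ofReal (binEntropy a))) :=
    fun a l hl => ENNReal.tendsto_ofReal ((continuous_binEntropy.tendsto a).mono_left hl)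
  rcases lt_or_ge β (1 / 2) with hβ2 | hβ2
  · refine ⟨β, ⟨hαβ, le_rfl⟩, ge_of_tendsto (hlim β (nhdsWithin β (Ioi β)) nhdsWithin_le_nhds) ?_⟩
    filter_upwards [Ioo_mem_nhdsGT hβ2] with t ht
    refine dimH_le_of_forall_exists (by linarith [ht.1]) (by linarith [ht.2]) hsub ?_
    rintro x ⟨-, -, rfl⟩
    obtain ⟨N, hN⟩ := exists_msum_le_of_upperM_lt ht.1
    refine ⟨N, fun n hn => mul_nonneg_of_nonpos_of_nonpos (by linarith [hN n hn]) ?_⟩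
    have := Real.log_le_log (x := t) (y := 1 - t) (by linarith [ht.1]) (by linarith [ht.2])
    linarith
  rcases lt_or_ge (1 / 2) α with hα2 | hα2
  · refine ⟨α, ⟨le_rfl, hαβ⟩, ge_of_tendsto (hlim α (nhdsWithin α (Iio α)) nhdsWithin_le_nhds) ?_⟩
    filter_upwards [Ioo_mem_nhdsLT hα2] with t ht
    refine dimH_le_of_forall_exists (by linarith [ht.1]) (by linarith [ht.2]) hsub ?_
    rintro x ⟨-, rfl, -⟩
    obtain ⟨N, hN⟩ := exists_le_msum_of_lt_lowerM ht.2
    refine ⟨N, fun n hn => mul_nonneg (by linarith [hN n hn]) ?_⟩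
    have := Real.log_le_log (x := 1 - t) (y := t) (by linarith [ht.2]) (by linarith [ht.1])
    linarith
  · refine ⟨1 / 2, ⟨hα2, hβ2⟩, ?_⟩
    rw [binEntropy_half, ENNReal.ofReal_one]
    exact (dimH_mono (subset_univ _)).trans Real.dimH_univ.le

lemma log_factorial_le {n : ℕ} (hn : 0 < n) :
    Real.log n.factorial ≤ n * Real.log n - n + (1 + Real.log n / 2) := by
  obtain ⟨m, rfl⟩ := Nat.exists_eq_succ_of_ne_zero hn.ne'
  have h1 := Stirling.log_stirlingSeq'_antitone (Nat.zero_le m)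
  simp only [Function.comp_apply] at h1
  rw [Stirling.log_stirlingSeq_formula, Stirling.log_stirlingSeq_formula] at h1
  have hm : (0 : ℝ) < (m.succ : ℕ) := by positivity
  rw [Real.log_mul (by norm_num) hm.ne', Real.log_div hm.ne' (Real.exp_pos 1).ne',
    Real.log_exp] at h1
  norm_num at h1 ⊢
  linarith

lemma le_log_factorial {n : ℕ} (hn : 0 < n) : n * Real.log n - n ≤ Real.log n.factorial := by
  have h1 := Stirling.le_log_factorial_stirling hn.ne'
  have h2 : 0 ≤ Real.log n := Real.log_natCast_nonneg n
  have h3 : 0 ≤ Real.log (2 * Real.pi) := Real.log_nonneg (by linarith [Real.pi_gt_three])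
  linarith

lemma le_log_choose {n k : ℕ} (hk : 0 < k) (hkn : k < n) :
    n * Real.binEntropy (k / n) - (2 + Real.log n) ≤ Real.log (n.choose k) := by
  have hn : 0 < n := hk.trans hkn
  have hk' : (0 : ℝ) < k := by exact_mod_cast hk
  have hn' : (0 : ℝ) < n := by exact_mod_cast hn
  have hkn' : (0 : ℝ) < (n - k : ℕ) := by exact_mod_cast Nat.sub_pos_of_lt hkn
  have hc : (0 : ℝ) < n.choose k := by exact_mod_cast Nat.choose_pos hkn.le
  have h0 : (n.choose k : ℝ) * k.factorial * (n - k).factorial = n.factorial := by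
    exact_mod_cast Nat.choose_mul_factorial_mul_factorial hkn.le
  have h1 := congrArg Real.log h0
  rw [Real.log_mul (by positivity) (by positivity), Real.log_mul (by positivity) (by positivity)]
    at h1
  have h2 := le_log_factorial hn
  have h3 := log_factorial_le hk
  have h4 := log_factorial_le (Nat.sub_pos_of_lt hkn)
  have h5 : Real.log k ≤ Real.log n := Real.log_le_log hk' (by exact_mod_cast hkn.le)
  have h6 : Real.log (n - k : ℕ) ≤ Real.log n :=
    Real.log_le_log hkn' (by exact_mod_cast Nat.sub_le _ _)
  have h7 : (1 : ℝ) - k / n = (n - k : ℕ) / n := by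
    rw [Nat.cast_sub hkn.le]; field_simp
  have h8 : n * Real.binEntropy (k / n) =
      n * Real.log n - k * Real.log k - (n - k : ℕ) * Real.log (n - k : ℕ) := by
    rw [Real.binEntropy, h7, Real.log_inv, Real.log_inv, Real.log_div hk'.ne' hn'.ne',
      Real.log_div hkn'.ne' hn'.ne']
    field_simp
    rw [Nat.cast_sub hkn.le]
    ring
  have h9 : ((n - k : ℕ) : ℝ) = n - k := Nat.cast_sub hkn.le
  linarith

lemma eventually_lt_log_choose {t s : ℝ} (h0 : 0 < t) (h1 : t < 1) (hs : s < Real.binEntropy t)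
    {k : ℕ → ℕ} (hk : Tendsto (fun n => (k n : ℝ) / n) atTop (nhds t)) :
    ∀ᶠ n : ℕ in atTop, s * n < Real.log (n.choose (k n)) := by
  have hlog : Tendsto (fun n : ℕ => (2 + Real.log n) / n) atTop (nhds 0) := by
    have h2 : Tendsto (fun n : ℕ => (2 : ℝ) / n) atTop (nhds 0) :=
      tendsto_const_div_atTop_nhds_zero_nat 2
    have h3 : Tendsto (fun n : ℕ => Real.log n / n) atTop (nhds 0) :=
      (Real.isLittleO_log_id_atTop.tendsto_div_nhds_zero).comp tendsto_natCast_atTop_atTop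
    simpa [add_div] using h2.add h3
  have hlim := ((Real.binEntropy_continuous.tendsto t).comp hk).sub hlog
  rw [sub_zero] at hlim
  filter_upwards [hlim.eventually_const_lt hs, hk.eventually_const_lt h0,
    hk.eventually_lt_const h1, eventually_gt_atTop 0] with n h2 h3 h4 hn
  have hn' : (0 : ℝ) < n := by exact_mod_cast hn
  have hk0 : 0 < k n := by
    rw [div_pos_iff_of_pos_right hn'] at h3; exact_mod_cast h3
  have hkn : k n < n := by
    rw [div_lt_one hn'] at h4; exact_mod_cast h4
  refine lt_of_lt_of_le ?_ (le_log_choose hk0 hkn)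
  have h5 := mul_lt_mul_of_pos_right h2 hn'
  simp only [Function.comp_apply, sub_mul, div_mul_cancel₀ _ hn'.ne'] at h5
  linarith

/-- There are exponentially many words of length `L` with a prescribed last digit and with
approximately `L * t` ones, with exponential rate close to the entropy of `t`. -/
lemma exists_block_length {t s : ℝ} (h0 : 0 < t) (h1 : t < 1) (hs0 : 0 < s)
    (hs : s < binEntropy t) :
    ∃ L D : ℕ, 2 ≤ D ∧ 1 ≤ L * t ∧ s * (L * Real.log 2) < Real.log D ∧
      ∀ c : ℕ, c = ⌊L * t⌋₊ ∨ c = ⌊L * t⌋₊ + 1 → D ≤ (L - 1).choose c := by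
  have hl : 0 < Real.log 2 := Real.log_pos (by norm_num)
  rw [binEntropy_eq_div, lt_div_iff₀ hl] at hs
  obtain ⟨r, hr, hrt⟩ := exists_between hs
  have hr0 : 0 < r := (mul_pos hs0 hl).trans hr
  have hk1 : Tendsto (fun n : ℕ => ((⌊((n + 1 : ℕ) : ℝ) * t⌋₊ : ℕ) : ℝ) / n) atTop (nhds t) := by
    have h2 : Tendsto (fun n : ℕ => t + t / n) atTop (nhds t) := by
      simpa using (tendsto_const_div_atTop_nhds_zero_nat t).const_add t
    have h3 : Tendsto (fun n : ℕ => t + (t - 1) / n) atTop (nhds t) := by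
      simpa using (tendsto_const_div_atTop_nhds_zero_nat (t - 1)).const_add t
    refine tendsto_of_tendsto_of_tendsto_of_le_of_le' h3 h2 ?_ ?_ <;>
      filter_upwards [eventually_gt_atTop 0] with n hn <;>
      have hn' : (0 : ℝ) < n := by exact_mod_cast hn
    · rw [le_div_iff₀ hn', add_mul, div_mul_cancel₀ _ hn'.ne']
      have := Nat.lt_floor_add_one (((n + 1 : ℕ) : ℝ) * t)
      push_cast at this ⊢
      linarith
    · rw [div_le_iff₀ hn', add_mul, div_mul_cancel₀ _ hn'.ne']
      have := Nat.floor_le (a := ((n + 1 : ℕ) : ℝ) * t) (by positivity)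
      push_cast at this ⊢
      linarith
  have hk2 : Tendsto (fun n : ℕ => ((⌊((n + 1 : ℕ) : ℝ) * t⌋₊ + 1 : ℕ) : ℝ) / n) atTop
      (nhds t) := by
    have h2 := hk1.add (tendsto_const_div_atTop_nhds_zero_nat 1)
    rw [add_zero] at h2
    refine h2.congr fun n => ?_
    push_cast
    rw [add_div]
  have hlarge : ∀ a b c : ℝ, 0 < a → ∀ᶠ n : ℕ in atTop, b ≤ a * n + c := fun a b c ha => by
    filter_upwards [tendsto_natCast_atTop_atTop.eventually_ge_atTop ((b - c) / a)] with n hn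
    rw [div_le_iff₀ ha] at hn
    linarith
  obtain ⟨n, e1, e2, e3, e4, e5⟩ := ((eventually_lt_log_choose h0 h1 hrt hk1).and
    ((eventually_lt_log_choose h0 h1 hrt hk2).and ((hlarge t 1 t h0).and
    ((hlarge r (Real.log 2) 0 hr0).and (hlarge (r - s * Real.log 2) (s * Real.log 2) 0
      (by linarith)))))).exists
  set k := ⌊((n + 1 : ℕ) : ℝ) * t⌋₊ with hk
  have hmin : r * n < Real.log ((min (n.choose k) (n.choose (k + 1)) : ℕ) : ℝ) := by
    rcases min_choice (n.choose k) (n.choose (k + 1)) with h | h <;> rw [h] <;> assumption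
  refine ⟨n + 1, min (n.choose k) (n.choose (k + 1)), ?_, ?_, ?_, ?_⟩
  · have h2 : Real.log 2 < Real.log ((min (n.choose k) (n.choose (k + 1)) : ℕ) : ℝ) := by linarith
    by_contra! h3
    have h4 := Real.log_nonpos (Nat.cast_nonneg (min (n.choose k) (n.choose (k + 1))))
      (by exact_mod_cast Nat.lt_succ_iff.1 h3)
    linarith
  · push_cast; linarith
  · push_cast at hmin ⊢; linarith
  · rintro c (rfl | rfl)
    · exact min_le_left _ _
    · exact min_le_right _ _

/-- A map which is Hölder with respect to another parametrisation bounds the dimension of the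
range of the latter from below. -/
lemma le_dimH_range_of_holder {Ω : Type*} [Nonempty Ω] {X G : Ω → ℝ} {C s : ℝ} (hC : 0 ≤ C)
    (hs : 0 < s) (hG : Icc 0 1 ⊆ range G)
    (h : ∀ ω ω', |G ω - G ω'| ≤ C * |X ω - X ω'| ^ s) : ENNReal.ofReal s ≤ dimH (range X) := by
  have hH : HolderOnWith C.toNNReal s.toNNReal (G ∘ Function.invFun X) (range X) := by
    intro x hx y hy
    rw [edist_dist, edist_dist, Real.dist_eq, Real.dist_eq, Real.coe_toNNReal _ hs.le,
      ENNReal.ofReal_rpow_of_nonneg (abs_nonneg _) hs.le, ← ENNReal.ofReal,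
      ← ENNReal.ofReal_mul hC]
    have h1 := h (Function.invFun X x) (Function.invFun X y)
    rw [Function.invFun_eq hx, Function.invFun_eq hy] at h1
    exact ENNReal.ofReal_le_ofReal h1
  have himg : Icc (0 : ℝ) 1 ⊆ (G ∘ Function.invFun X) '' range X := by
    intro y hy
    obtain ⟨ω, rfl⟩ := hG hy
    refine ⟨X ω, mem_range_self _, ?_⟩
    have h1 := h (Function.invFun X (X ω)) ω
    rw [Function.invFun_eq (f := X) ⟨ω, rfl⟩, sub_self, abs_zero, Real.zero_rpow hs.ne', mul_zero] at h1
    exact sub_eq_zero.1 (abs_nonpos_iff.1 h1)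
  have h1 := hH.dimH_image_le (Real.toNNReal_pos.2 hs)
  have h2 := dimH_mono himg
  rw [Real.dimH_of_nonempty_interior (by simp)] at h2
  simp only [Module.finrank_self, Nat.cast_one] at h2
  have h3 := h2.trans h1
  rw [ENNReal.le_div_iff_mul_le (by simp [hs]) (by simp), one_mul] at h3
  exact h3

lemma ofDigits_two_eq (d : ℕ → Fin 2) :
    Real.ofDigits d = ((d 0 : ℕ) + Real.ofDigits fun i => d (i + 1)) / 2 := by
  rw [Real.ofDigits_eq_sum_add_ofDigits d 1]
  simp [Real.ofDigitsTerm]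
  ring

lemma fin_two_val_le_one (a : Fin 2) : ((a : ℕ) : ℝ) ≤ 1 := by
  exact_mod_cast Nat.lt_succ_iff.1 a.2

lemma ofDigits_sub_le_of_eq {a b : ℕ → Fin 2} {k : ℕ} (h : a k = b k) :
    Real.ofDigits a - Real.ofDigits b ≤ 1 - (1 / 2) ^ (k + 1) := by
  induction k generalizing a b with
  | zero =>
    rw [ofDigits_two_eq a, ofDigits_two_eq b, h]
    have h1 := Real.ofDigits_le_one fun i => a (i + 1)
    have h2 := Real.ofDigits_nonneg fun i => b (i + 1)
    linarith
  | succ k ih =>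
    rw [ofDigits_two_eq a, ofDigits_two_eq b]
    have h1 := ih (a := fun i => a (i + 1)) (b := fun i => b (i + 1)) h
    have h2 := fin_two_val_le_one (a 0)
    have h3 : (0 : ℝ) ≤ ((b 0 : ℕ) : ℝ) := Nat.cast_nonneg _
    rw [pow_succ]
    linarith

/-- Two digit sequences which differ somewhere but agree at a later place `N` give numbers at
distance at least `2 ^ (-(N + 1))`. -/
lemma le_abs_ofDigits_sub {a b : ℕ → Fin 2} {n N : ℕ} (hnN : n < N) (hne : a n ≠ b n)
    (hN : a N = b N) : (1 / 2) ^ (N + 1) ≤ |Real.ofDigits a - Real.ofDigits b| := by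
  induction N generalizing a b n with
  | zero => omega
  | succ N ih =>
    by_cases h0 : a 0 = b 0
    · have hn : n ≠ 0 := fun h => hne (h ▸ h0)
      obtain ⟨m, rfl⟩ := Nat.exists_eq_succ_of_ne_zero hn
      have h1 := ih (a := fun i => a (i + 1)) (b := fun i => b (i + 1)) (n := m) (by omega) hne hN
      rw [ofDigits_two_eq a, ofDigits_two_eq b, h0, ← sub_div, add_sub_add_left_eq_sub, abs_div,
        abs_two, pow_succ]
      linarith
    · clear hne
      wlog hab : a 0 = 1 ∧ b 0 = 0 generalizing a b
      · rw [abs_sub_comm]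
        refine this (a := b) (b := a) hN.symm (Ne.symm h0) ?_
        generalize a 0 = u at *
        generalize b 0 = v at *
        revert u v
        decide
      · have h1 := ofDigits_sub_le_of_eq (a := fun i => b (i + 1)) (b := fun i => a (i + 1)) hN.symm
        refine le_trans ?_ (le_abs_self _)
        rw [ofDigits_two_eq a, ofDigits_two_eq b, hab.1, hab.2, pow_succ]
        norm_num at h1 ⊢
        linarith

lemma ofDigits_two_pos {d : ℕ → Fin 2} {n : ℕ} (h : d n = 1) : 0 < Real.ofDigits d := by
  induction n generalizing d with
  | zero =>
    rw [ofDigits_two_eq, h]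
    have := Real.ofDigits_nonneg fun i => d (i + 1)
    norm_num
    linarith
  | succ n ih =>
    rw [ofDigits_two_eq]
    have := ih (d := fun i => d (i + 1)) h
    positivity

lemma exists_ofDigits_mul_pow (d : ℕ → Fin 2) (n : ℕ) : ∃ z : ℤ,
    Real.ofDigits d * 2 ^ n = z + Real.ofDigits (fun i => d (i + n)) ∧
    Real.ofDigits d * 2 ^ (n + 1) = 2 * z + (d n : ℕ) + Real.ofDigits fun i => d (i + (n + 1)) := by
  have key : ∀ m, 2 * Real.ofDigits (fun i => d (i + m)) =
      (d m : ℕ) + Real.ofDigits fun i => d (i + (m + 1)) := by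
    intro m
    rw [ofDigits_two_eq fun i => d (i + m)]
    simp only [zero_add, add_assoc, add_comm 1 m]
    ring
  induction n with
  | zero =>
    have h0 := key 0
    simp only [add_zero, zero_add] at h0 ⊢
    refine ⟨0, by simp, ?_⟩
    rw [Int.cast_zero, mul_zero, zero_add, ← h0, pow_one, mul_comm]
  | succ n ih =>
    obtain ⟨z, -, hz⟩ := ih
    refine ⟨2 * z + (d n : ℕ), by push_cast; exact hz, ?_⟩
    rw [pow_succ, ← mul_assoc, hz]
    push_cast
    linarith [key (n + 1)]

lemma padicDigit_ofDigits {d : ℕ → Fin 2} (h : ∀ n, ∃ m ≥ n, d m = 1) (n : ℕ) :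
    padicDigit 2 (Real.ofDigits d) n = (d n : ℕ) := by
  have hT : ∀ m, ⌈Real.ofDigits fun i => d (i + m)⌉ = 1 := by
    intro m
    obtain ⟨k, hk, hd⟩ := h m
    rw [Int.ceil_eq_iff]
    have h1 := ofDigits_two_pos (d := fun i => d (i + m)) (n := k - m)
      (by rwa [Nat.sub_add_cancel hk])
    simpa using ⟨h1, Real.ofDigits_le_one _⟩
  obtain ⟨z, h1, h2⟩ := exists_ofDigits_mul_pow d n
  have h3 : (2 : ℝ) * z + (d n : ℕ) = ((2 * z + (d n : ℕ) : ℤ) : ℝ) := by push_cast; ring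
  rw [padicDigit, Nat.cast_ofNat, h1, h2, h3, Int.ceil_intCast_add, Int.ceil_intCast_add, hT, hT]
  push_cast
  ring

lemma tendsto_moving_bounds {u : ℕ → ℝ} {a C : ℝ} (h : ∀ n, 0 < n → |u n - a| ≤ C / n) :
    Tendsto u atTop (nhds a) := by
  rw [tendsto_iff_dist_tendsto_zero]
  refine squeeze_zero' (Eventually.of_forall fun n => dist_nonneg) ?_
    (tendsto_const_div_atTop_nhds_zero_nat C)
  filter_upwards [eventually_gt_atTop 0] with n hn
  exact h n hn

/-- If the digit sums of `x` follow those of a sequence `g` up to a bounded error, then the moving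
digit means of `x` are governed by the long constant stretches of `g`. -/
lemma mem_BanachSet_of_bounded {x α β C : ℝ} {g : ℕ → ℝ} (hx : x ∈ Icc (0 : ℝ) 1)
    (hg : ∀ n, g n ∈ Icc α β)
    (hS : ∀ n, |(msum 2 x 0 n : ℝ) - ∑ i ∈ Finset.range n, g i| ≤ C)
    (ha : ∀ n, ∃ᶠ m in atTop, ∀ i < n, g (m + i) = α)
    (hb : ∀ n, ∃ᶠ m in atTop, ∀ i < n, g (m + i) = β) : x ∈ BanachSet 2 α β := by
  have hw : ∀ m n, |(msum 2 x m n : ℝ) - ∑ i ∈ Finset.range n, g (m + i)| ≤ 2 * C := by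
    intro m n
    have h1 := abs_le.1 (hS (m + n))
    have h2 := abs_le.1 (hS m)
    rw [Finset.sum_range_add] at h1
    rw [msum_eq_sub, abs_le]
    push_cast
    constructor <;> linarith [h1.1, h1.2, h2.1, h2.2]
  have hdiv : ∀ n, 0 < n → ∀ m, ∀ c : ℝ,
      ((∑ i ∈ Finset.range n, g (m + i) ≤ n * c → (msum 2 x m n : ℝ) / n ≤ c + 2 * C / n) ∧
      (n * c ≤ ∑ i ∈ Finset.range n, g (m + i) → c - 2 * C / n ≤ (msum 2 x m n : ℝ) / n)) := by
    intro n hn m c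
    have hn' : (0 : ℝ) < n := by exact_mod_cast hn
    have h1 := abs_le.1 (hw m n)
    constructor <;> intro h2
    · rw [div_le_iff₀ hn', add_mul, div_mul_cancel₀ _ hn'.ne']
      linarith [h1.2]
    · rw [le_div_iff₀ hn', sub_mul, div_mul_cancel₀ _ hn'.ne']
      linarith [h1.1]
  have hconst : ∀ n m, ∀ c : ℝ, (∀ i < n, g (m + i) = c) →
      ∑ i ∈ Finset.range n, g (m + i) = n * c := by
    intro n m c h
    rw [Finset.sum_congr rfl fun i hi => h i (Finset.mem_range.1 hi)]
    simp
  have hle : ∀ n m, ∑ i ∈ Finset.range n, g (m + i) ≤ n * β := by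
    intro n m
    simpa using Finset.sum_le_card_nsmul (Finset.range n) _ β fun i _ => (hg (m + i)).2
  have hge : ∀ n m, n * α ≤ ∑ i ∈ Finset.range n, g (m + i) := by
    intro n m
    simpa using Finset.card_nsmul_le_sum (Finset.range n) _ α fun i _ => (hg (m + i)).1
  refine ⟨hx, Tendsto.liminf_eq (tendsto_moving_bounds (C := 2 * C) fun n hn => ?_),
    Tendsto.limsup_eq (tendsto_moving_bounds (C := 2 * C) fun n hn => ?_)⟩
  · have hmem := fun m => msum_div_mem x m n
    have h1 : lowerMn 2 x n ≤ α + 2 * C / n := liminf_le_of_frequently_le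
      ((ha n).mono fun m hm => (hdiv n hn m α).1 (hconst n m α hm).le)
      (isBoundedUnder_ge_of_mem hmem)
    have h2 : α - 2 * C / n ≤ lowerMn 2 x n := le_liminf_of_le
      (isBoundedUnder_le_of_mem hmem).isCoboundedUnder_ge
      (Eventually.of_forall fun m => (hdiv n hn m α).2 (hge n m))
    rw [abs_le]
    constructor <;> linarith
  · have hmem := fun m => msum_div_mem x m n
    have h1 : upperMn 2 x n ≤ β + 2 * C / n := limsup_le_of_le
      (isBoundedUnder_ge_of_mem hmem).isCoboundedUnder_le
      (Eventually.of_forall fun m => (hdiv n hn m β).1 (hle n m))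
    have h2 : β - 2 * C / n ≤ upperMn 2 x n := le_limsup_of_frequently_le
      ((hb n).mono fun m hm => (hdiv n hn m β).2 (hconst n m β hm).ge)
      (isBoundedUnder_le_of_mem hmem)
    rw [abs_le]
    constructor <;> linarith

/-- The blocks which are not among the first `j` blocks of a dyadic range `[2 ^ j, 2 ^ (j + 1))`. -/
abbrev IsFreeBlock (i : ℕ) : Prop := 2 ^ Nat.log 2 i + Nat.log 2 i ≤ i

/-- The digit mean prescribed on the `i`-th block: `t` on the free blocks, and alternately `α` and
`β` on the sparse stretches of blocks which are not free. -/
def blockMean (α β t : ℝ) (i : ℕ) : ℝ :=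
  if IsFreeBlock i then t else if Even (Nat.log 2 i) then α else β

lemma blockMean_mem {α β t : ℝ} (ht : t ∈ Icc α β) (i : ℕ) : blockMean α β t i ∈ Icc α β := by
  have h := ht.1.trans ht.2
  rw [blockMean]
  split_ifs
  exacts [ht, ⟨le_rfl, h⟩, ⟨h, le_rfl⟩]

lemma log_two_pow_add {j r : ℕ} (h : r ≤ j) : Nat.log 2 (2 ^ j + r) = j := by
  have h1 : j < 2 ^ j := Nat.lt_two_pow_self
  refine Nat.log_eq_of_pow_le_of_lt_pow (by omega) ?_
  rw [pow_succ]
  omega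

lemma blockMean_two_pow_add (α β t : ℝ) {L j i : ℕ} (hL : 0 < L) (h : i < j) :
    blockMean α β t ((L * 2 ^ j + i) / L) = if Even j then α else β := by
  have h1 : i / L < j := (Nat.div_le_self i L).trans_lt h
  have hlog := log_two_pow_add h1.le
  have hnot : ¬ IsFreeBlock (2 ^ j + i / L) := by rw [IsFreeBlock, hlog]; omega
  rw [Nat.mul_add_div hL, blockMean, if_neg hnot]
  simp only [hlog]

lemma frequently_blockMean_eq_left (α β t : ℝ) {L : ℕ} (hL : 0 < L) (n : ℕ) :
    ∃ᶠ m in atTop, ∀ i < n, blockMean α β t ((m + i) / L) = α := by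
  refine frequently_atTop.2 fun M => ⟨L * 2 ^ (2 * (n + M)), ?_, fun i hi => ?_⟩
  · exact ((by omega : M ≤ 2 * (n + M)).trans Nat.lt_two_pow_self.le).trans
      (Nat.le_mul_of_pos_left _ hL)
  · rw [blockMean_two_pow_add α β t hL (by omega), if_pos (by simp)]

lemma frequently_blockMean_eq_right (α β t : ℝ) {L : ℕ} (hL : 0 < L) (n : ℕ) :
    ∃ᶠ m in atTop, ∀ i < n, blockMean α β t ((m + i) / L) = β := by
  refine frequently_atTop.2 fun M => ⟨L * 2 ^ (2 * (n + M) + 1), ?_, fun i hi => ?_⟩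
  · exact ((by omega : M ≤ 2 * (n + M) + 1).trans Nat.lt_two_pow_self.le).trans
      (Nat.le_mul_of_pos_left _ hL)
  · rw [blockMean_two_pow_add α β t hL (by omega), if_neg (by simp)]

lemma exists_isFreeBlock_ge (n : ℕ) : ∃ m ≥ n, IsFreeBlock m :=
  ⟨2 ^ n + n, Nat.le_add_left _ _, by rw [IsFreeBlock, log_two_pow_add le_rfl]⟩

lemma infinite_isFreeBlock : {i | IsFreeBlock i}.Infinite :=
  Nat.frequently_atTop_iff_infinite.1 (frequently_atTop.2 exists_isFreeBlock_ge)

lemma le_count_isFreeBlock_add (n : ℕ) :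
    n ≤ Nat.count IsFreeBlock n + ((Nat.log 2 n + 1) ^ 2 + 1) := by
  have h1 := Finset.card_filter_add_card_filter_not (s := Finset.range n) IsFreeBlock
  rw [← Nat.count_eq_card_filter_range, Finset.card_range] at h1
  have h2 : ((Finset.range n).filter fun i => ¬ IsFreeBlock i).card ≤
      (Nat.log 2 n + 1) ^ 2 + 1 := by
    have h3 : ((Finset.range n).filter fun i => ¬ IsFreeBlock i) ⊆
        insert 0 ((Finset.range (Nat.log 2 n + 1) ×ˢ Finset.range (Nat.log 2 n + 1)).image
          fun q => 2 ^ q.1 + q.2) := by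
      intro i hi
      rw [Finset.mem_filter, Finset.mem_range, IsFreeBlock] at hi
      have h4 : Nat.log 2 i ≤ Nat.log 2 n := Nat.log_mono_right hi.1.le
      by_cases h0 : i = 0
      · exact h0 ▸ Finset.mem_insert_self _ _
      have h5 := Nat.pow_log_le_self 2 h0
      refine Finset.mem_insert_of_mem
        (Finset.mem_image.2 ⟨(Nat.log 2 i, i - 2 ^ Nat.log 2 i), ?_, by dsimp; omega⟩)
      rw [Finset.mem_product, Finset.mem_range, Finset.mem_range]
      exact ⟨by dsimp; omega, by dsimp; omega⟩
    refine (Finset.card_le_card h3).trans ((Finset.card_insert_le _ _).trans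
      (Nat.succ_le_succ (Finset.card_image_le.trans ?_)))
    simp [sq]
  omega

lemma exists_le_count_isFreeBlock {ε : ℝ} (hε : 0 < ε) :
    ∃ C, 0 ≤ C ∧ ∀ n : ℕ, (1 - ε) * n - C ≤ Nat.count IsFreeBlock n := by
  have hlim : Tendsto (fun j : ℕ => ((j + 1 : ℕ) : ℝ) ^ 2 / 2 ^ (j + 1)) atTop (nhds 0) :=
    (tendsto_pow_const_div_const_pow_of_one_lt 2 (by norm_num : (1 : ℝ) < 2)).comp
      (tendsto_add_atTop_nat 1)
  obtain ⟨J, hJ⟩ := eventually_atTop.1 (hlim.eventually_lt_const (half_pos hε))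
  have hbound : ∀ j : ℕ, ((j + 1 : ℕ) : ℝ) ^ 2 ≤ ε * 2 ^ j + ((J + 1 : ℕ) : ℝ) ^ 2 := by
    intro j
    rcases le_or_gt J j with h | h
    · have h1 := (hJ j h).le
      rw [div_le_iff₀ (by positivity), pow_succ (2 : ℝ) j] at h1
      nlinarith [sq_nonneg ((J + 1 : ℕ) : ℝ)]
    · have h1 : ((j + 1 : ℕ) : ℝ) ≤ (J + 1 : ℕ) := by exact_mod_cast by omega
      have h2 : (0 : ℝ) ≤ ε * 2 ^ j := by positivity
      have h3 := pow_le_pow_left₀ (Nat.cast_nonneg _) h1 2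
      linarith
  refine ⟨ε + ((J + 1 : ℕ) : ℝ) ^ 2 + 1, by positivity, fun n => ?_⟩
  have h1 : (n : ℝ) ≤ Nat.count IsFreeBlock n + (((Nat.log 2 n + 1 : ℕ) : ℝ) ^ 2 + 1) := by
    exact_mod_cast le_count_isFreeBlock_add n
  have h2 := hbound (Nat.log 2 n)
  have h3 : (2 : ℝ) ^ Nat.log 2 n ≤ n + 1 := by
    rcases eq_or_ne n 0 with rfl | hn
    · simp
    · exact (by exact_mod_cast Nat.pow_log_le_self 2 hn : (2 : ℝ) ^ Nat.log 2 n ≤ n).trans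
        (by linarith)
  nlinarith

/-- The number of ones in the `i`-th block of length `L`, following the prescribed means `f`. -/
def blockOnes (L : ℕ) (f : ℕ → ℝ) (i : ℕ) : ℕ :=
  ⌊L * ∑ j ∈ Finset.range (i + 1), f j⌋₊ - ⌊L * ∑ j ∈ Finset.range i, f j⌋₊

lemma sum_blockOnes {L : ℕ} {f : ℕ → ℝ} (hf : ∀ i, f i ∈ Icc (0 : ℝ) 1) (i : ℕ) :
    ∑ j ∈ Finset.range i, blockOnes L f j = ⌊L * ∑ j ∈ Finset.range i, f j⌋₊ := by
  induction i with
  | zero => simp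
  | succ i ih =>
    rw [Finset.sum_range_succ, ih, blockOnes]
    have : ⌊L * ∑ j ∈ Finset.range i, f j⌋₊ ≤ ⌊L * ∑ j ∈ Finset.range (i + 1), f j⌋₊ := by
      refine Nat.floor_mono (mul_le_mul_of_nonneg_left ?_ L.cast_nonneg)
      rw [Finset.sum_range_succ]
      linarith [(hf i).1]
    omega

lemma blockOnes_eq {L : ℕ} {f : ℕ → ℝ} (hf : ∀ i, f i ∈ Icc (0 : ℝ) 1) (i : ℕ) :
    blockOnes L f i = ⌊L * f i⌋₊ ∨ blockOnes L f i = ⌊L * f i⌋₊ + 1 := by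
  have h0 : 0 ≤ L * ∑ j ∈ Finset.range i, f j :=
    mul_nonneg L.cast_nonneg (Finset.sum_nonneg fun j _ => (hf j).1)
  have h1 : 0 ≤ L * f i := mul_nonneg L.cast_nonneg (hf i).1
  rw [blockOnes, Finset.sum_range_succ, mul_add]
  generalize (L : ℝ) * ∑ j ∈ Finset.range i, f j = u at *
  generalize (L : ℝ) * f i = v at *
  have h2 : ⌊u + v⌋₊ < ⌊u⌋₊ + ⌊v⌋₊ + 2 := by
    rw [Nat.floor_lt (add_nonneg h0 h1)]
    push_cast
    linarith [Nat.lt_floor_add_one u, Nat.lt_floor_add_one v]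
  have h3 : ⌊u⌋₊ + ⌊v⌋₊ ≤ ⌊u + v⌋₊ := by
    refine Nat.le_floor ?_
    push_cast
    exact add_le_add (Nat.floor_le h0) (Nat.floor_le h1)
  omega

lemma blockOnes_le {L : ℕ} {f : ℕ → ℝ} (hf : ∀ i, f i ∈ Icc (0 : ℝ) 1) (i : ℕ) :
    blockOnes L f i ≤ L := by
  have h0 : 0 ≤ L * ∑ j ∈ Finset.range i, f j :=
    mul_nonneg L.cast_nonneg (Finset.sum_nonneg fun j _ => (hf j).1)
  rw [blockOnes, Finset.sum_range_succ, mul_add, Nat.sub_le_iff_le_add, add_comm L,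
    ← Nat.floor_add_natCast h0]
  refine Nat.floor_mono ?_
  have := mul_le_mul_of_nonneg_left (hf i).2 (L.cast_nonneg : (0 : ℝ) ≤ L)
  linarith

/-- The digit sequence whose `i`-th block of length `L` has ones exactly at the places in `A i`. -/
def blockDigits (L : ℕ) (A : ℕ → Finset ℕ) (n : ℕ) : Fin 2 :=
  if n % L ∈ A (n / L) then 1 else 0

lemma blockDigits_mul_add {L : ℕ} (A : ℕ → Finset ℕ) (i : ℕ) {r : ℕ} (hr : r < L) :
    blockDigits L A (L * i + r) = if r ∈ A i then 1 else 0 := by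
  rw [blockDigits, Nat.mul_add_mod, Nat.mod_eq_of_lt hr, Nat.mul_add_div (by omega),
    Nat.div_eq_of_lt hr, add_zero]

lemma sum_blockDigits {L : ℕ} {A : ℕ → Finset ℕ} (hA : ∀ i, A i ⊆ Finset.range L) (i : ℕ) :
    ∑ n ∈ Finset.range (L * i), (blockDigits L A n : ℕ) = ∑ j ∈ Finset.range i, (A j).card := by
  induction i with
  | zero => simp
  | succ i ih =>
    rw [mul_add, mul_one, Finset.sum_range_add, ih, Finset.sum_range_succ]
    congr 1
    rw [Finset.sum_congr rfl fun r hr => by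
      rw [blockDigits_mul_add A i (Finset.mem_range.1 hr)]]
    have : ∀ r, ((if r ∈ A i then (1 : Fin 2) else 0 : Fin 2) : ℕ) = if r ∈ A i then 1 else 0 := by
      intro r; split_ifs <;> rfl
    simp_rw [this]
    rw [Finset.sum_ite_mem, Finset.inter_eq_right.2 (hA i)]
    simp

lemma sum_mul_div (L : ℕ) (hL : 0 < L) (f : ℕ → ℝ) (i : ℕ) :
    ∑ n ∈ Finset.range (L * i), f (n / L) = L * ∑ j ∈ Finset.range i, f j := by
  induction i with
  | zero => simp
  | succ i ih =>
    have h : ∀ r ∈ Finset.range L, f ((L * i + r) / L) = f i := fun r hr => by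
      rw [Nat.mul_add_div hL, Nat.div_eq_of_lt (Finset.mem_range.1 hr), add_zero]
    rw [mul_add, mul_one, Finset.sum_range_add, ih, Finset.sum_range_succ,
      Finset.sum_congr rfl h, Finset.sum_const, Finset.card_range, nsmul_eq_mul, mul_add]

lemma sum_range_mem_of_unit {u : ℕ → ℝ} (hu : ∀ n, u n ∈ Icc (0 : ℝ) 1) {L : ℕ} (hL : 0 < L)
    (n : ℕ) : ∑ m ∈ Finset.range n, u m ∈ Icc (∑ m ∈ Finset.range (L * (n / L)), u m)
      (∑ m ∈ Finset.range (L * (n / L)), u m + L) := by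
  have hn : n = L * (n / L) + n % L := (Nat.div_add_mod n L).symm
  have h1 : (n % L : ℕ) ≤ (L : ℝ) := by exact_mod_cast (Nat.mod_lt n hL).le
  have h2 := Finset.sum_nonneg fun m (_ : m ∈ Finset.range (n % L)) => (hu (L * (n / L) + m)).1
  have h3 := Finset.sum_le_card_nsmul (Finset.range (n % L)) _ (1 : ℝ)
    fun m _ => (hu (L * (n / L) + m)).2
  rw [Finset.card_range, nsmul_eq_mul, mul_one] at h3
  have h4 : ∑ m ∈ Finset.range n, u m = ∑ m ∈ Finset.range (L * (n / L)), u m +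
      ∑ m ∈ Finset.range (n % L), u (L * (n / L) + m) := by
    rw [← Finset.sum_range_add, ← hn]
  rw [h4]
  constructor <;> linarith

lemma ofDigits_blockDigits_mem_BanachSet {α β t : ℝ} (hα : 0 ≤ α) (hβ : β ≤ 1) (ht : t ∈ Icc α β)
    {L : ℕ} (hLt : 1 ≤ L * t) {A : ℕ → Finset ℕ} (hA : ∀ i, A i ⊆ Finset.range L)
    (hc : ∀ i, (A i).card = blockOnes L (blockMean α β t) i) :
    Real.ofDigits (blockDigits L A) ∈ BanachSet 2 α β := by
  have hL : 0 < L := Nat.pos_of_ne_zero fun h => by subst h; norm_num at hLt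
  have hf : ∀ i, blockMean α β t i ∈ Icc (0 : ℝ) 1 := fun i =>
    Icc_subset_Icc hα hβ (blockMean_mem ht i)
  have hone : ∀ n, ∃ m ≥ n, blockDigits L A m = 1 := by
    intro n
    obtain ⟨i, hi, hfree⟩ := exists_isFreeBlock_ge n
    have h1 : 1 ≤ ⌊(L : ℝ) * blockMean α β t i⌋₊ := by
      rw [blockMean, if_pos hfree]
      exact Nat.le_floor (by exact_mod_cast hLt)
    have h2 : 0 < (A i).card := by
      rcases blockOnes_eq (L := L) hf i with h | h <;> rw [hc, h] <;> omega
    obtain ⟨r, hr⟩ := Finset.card_pos.1 h2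
    refine ⟨L * i + r, ?_, ?_⟩
    · exact hi.trans ((Nat.le_mul_of_pos_left i hL).trans (Nat.le_add_right _ _))
    · rw [blockDigits_mul_add A i (Finset.mem_range.1 (hA i hr)), if_pos hr]
  have hsum : ∀ n, (msum 2 (Real.ofDigits (blockDigits L A)) 0 n : ℝ) =
      ∑ m ∈ Finset.range n, ((blockDigits L A m : ℕ) : ℝ) := by
    intro n
    simp [msum, padicDigit_ofDigits hone]
  refine mem_BanachSet_of_bounded (C := L + 1) (g := fun n => blockMean α β t (n / L))
    ⟨Real.ofDigits_nonneg _, Real.ofDigits_le_one _⟩ (fun n => blockMean_mem ht _) (fun n => ?_)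
    (frequently_blockMean_eq_left α β t hL) (frequently_blockMean_eq_right α β t hL)
  have h1 := sum_range_mem_of_unit (u := fun m => ((blockDigits L A m : ℕ) : ℝ))
    (fun m => ⟨Nat.cast_nonneg _, fin_two_val_le_one _⟩) hL n
  have h2 := sum_range_mem_of_unit (fun m => hf (m / L)) hL n
  rw [sum_mul_div L hL] at h2
  have h3 : ∑ m ∈ Finset.range (L * (n / L)), ((blockDigits L A m : ℕ) : ℝ) =
      ⌊L * ∑ j ∈ Finset.range (n / L), blockMean α β t j⌋₊ := by
    rw [← sum_blockOnes hf, ← Finset.sum_congr rfl fun i _ => hc i, ← sum_blockDigits hA]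
    push_cast
    rfl
  rw [h3] at h1
  have h4 := Nat.floor_le (a := L * ∑ j ∈ Finset.range (n / L), blockMean α β t j)
    (mul_nonneg L.cast_nonneg (Finset.sum_nonneg fun j _ => (hf j).1))
  have h5 := Nat.lt_floor_add_one (L * ∑ j ∈ Finset.range (n / L), blockMean α β t j)
  rw [hsum, abs_le]
  constructor <;> linarith [h1.1, h1.2, h2.1, h2.2]

lemma exists_injective_card_eq {D m c : ℕ} (h : D ≤ m.choose c) : ∃ e : Fin D → Finset ℕ,
    Function.Injective e ∧ ∀ a, e a ⊆ Finset.range m ∧ (e a).card = c := by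
  have hcard : Fintype.card (Fin D) ≤
      Fintype.card (Finset.powersetCard c (Finset.range m)) := by
    rwa [Fintype.card_coe, Finset.card_powersetCard, Finset.card_range, Fintype.card_fin]
  obtain ⟨e⟩ := Function.Embedding.nonempty_of_card_le hcard
  exact ⟨fun a => (e a : Finset ℕ), Subtype.val_injective.comp e.injective,
    fun a => Finset.mem_powersetCard.1 (e a).2⟩

lemma exists_block_family {L D : ℕ} {c : ℕ → ℕ} (hc : ∀ i, c i ≤ L)
    (hD : ∀ i, IsFreeBlock i → D ≤ (L - 1).choose (c i)) :
    ∃ e : ℕ → Fin D → Finset ℕ, ∀ i, (∀ a, e i a ⊆ Finset.range L ∧ (e i a).card = c i) ∧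
      (IsFreeBlock i → Function.Injective (e i) ∧ ∀ a, e i a ⊆ Finset.range (L - 1)) ∧
      (¬ IsFreeBlock i → ∀ a b, e i a = e i b) := by
  rw [← Classical.skolem (p := fun i (e : Fin D → Finset ℕ) =>
    (∀ a, e a ⊆ Finset.range L ∧ (e a).card = c i) ∧
      (IsFreeBlock i → Function.Injective e ∧ ∀ a, e a ⊆ Finset.range (L - 1)) ∧
      (¬ IsFreeBlock i → ∀ a b, e a = e b))]
  intro i
  by_cases hi : IsFreeBlock i
  · obtain ⟨e, he, hec⟩ := exists_injective_card_eq (hD i hi)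
    exact ⟨e, fun a => ⟨(hec a).1.trans (Finset.range_mono (Nat.sub_le _ _)), (hec a).2⟩,
      fun _ => ⟨he, fun a => (hec a).1⟩, fun h => absurd hi h⟩
  · exact ⟨fun _ => Finset.range (c i), fun _ => ⟨Finset.range_mono (hc i), Finset.card_range _⟩,
      fun h => absurd h hi, fun _ _ _ => rfl⟩

/-- If two digit sequences are encoded by different symbol sequences, then the first differing block
controls both the distance of the encoded numbers and the distance of the codes. -/
lemma exists_block_of_ne {L D : ℕ} {e : ℕ → Fin D → Finset ℕ} (hL : 0 < L)
    (he : ∀ i, IsFreeBlock i → Function.Injective (e i) ∧ ∀ a, e i a ⊆ Finset.range (L - 1))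
    (he' : ∀ i, ¬ IsFreeBlock i → ∀ a b, e i a = e i b) {x y : ℕ → Fin D} (hxy : x ≠ y) :
    ∃ i, |Real.ofDigits x - Real.ofDigits y| ≤ ((D : ℝ) ^ Nat.count IsFreeBlock i)⁻¹ ∧
      (1 / 2) ^ (L * (i + 1)) ≤
        |Real.ofDigits (blockDigits L fun i => e i (x (Nat.count IsFreeBlock i))) -
          Real.ofDigits (blockDigits L fun i => e i (y (Nat.count IsFreeBlock i)))| := by
  have hcount := Nat.count_nth_of_infinite infinite_isFreeBlock
  have hnth := Nat.nth_mem_of_infinite infinite_isFreeBlock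
  have hex : ∃ i, e i (x (Nat.count IsFreeBlock i)) ≠ e i (y (Nat.count IsFreeBlock i)) := by
    obtain ⟨k, hk⟩ := Function.ne_iff.1 hxy
    refine ⟨Nat.nth IsFreeBlock k, fun h => hk ?_⟩
    rw [hcount] at h
    exact (he _ (hnth k)).1 h
  classical
  have hne := Nat.find_spec hex
  have hmin := fun j (hj : j < Nat.find hex) => not_not.1 (Nat.find_min hex hj)
  set i := Nat.find hex
  have hi : IsFreeBlock i := by
    by_contra h
    exact hne (he' i h _ _)
  refine ⟨i, Real.abs_ofDigits_sub_ofDigits_le fun k hk => ?_, ?_⟩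
  · have h := hmin _ (Nat.nth_lt_of_lt_count hk)
    rw [hcount] at h
    exact (he _ (hnth k)).1 h
  · have hr : ∃ r, ¬ (r ∈ e i (x (Nat.count IsFreeBlock i)) ↔
        r ∈ e i (y (Nat.count IsFreeBlock i))) := by
      by_contra! h
      exact hne (Finset.ext h)
    obtain ⟨r, hr⟩ := hr
    have hlt : r < L - 1 := by
      by_contra h
      have hout : ∀ a, r ∉ e i a := fun a ha => h (Finset.mem_range.1 ((he i hi).2 a ha))
      exact hr (iff_of_false (hout _) (hout _))
    have hlast : ∀ a, L - 1 ∉ e i a := fun a ha =>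
      lt_irrefl _ (Finset.mem_range.1 ((he i hi).2 a ha))
    have hexp : L * (i + 1) = L * i + (L - 1) + 1 := by
      rw [mul_add, mul_one]
      omega
    rw [hexp]
    refine le_abs_ofDigits_sub (n := L * i + r) (by omega) ?_ ?_
    · rw [blockDigits_mul_add _ _ (by omega), blockDigits_mul_add _ _ (by omega)]
      split_ifs with h1 h2 h2
      · exact absurd (iff_of_true h1 h2) hr
      · decide
      · decide
      · exact absurd (iff_of_false h1 h2) hr
    · rw [blockDigits_mul_add _ _ (by omega), blockDigits_mul_add _ _ (by omega),
        if_neg (hlast _), if_neg (hlast _)]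

lemma le_dimH_BanachSet_two {α β t s : ℝ} (hα : 0 ≤ α) (hβ : β ≤ 1) (ht : t ∈ Icc α β)
    (h0 : 0 < t) (h1 : t < 1) (hs0 : 0 < s) (hs : s < binEntropy t) :
    ENNReal.ofReal s ≤ dimH (BanachSet 2 α β) := by
  obtain ⟨L, D, hD, hLt, hlog, hchoose⟩ := exists_block_length h0 h1 hs0 hs
  have hL : 0 < L := Nat.pos_of_ne_zero fun h => by subst h; norm_num at hLt
  have hf : ∀ i, blockMean α β t i ∈ Icc (0 : ℝ) 1 := fun i =>
    Icc_subset_Icc hα hβ (blockMean_mem ht i)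
  have hlogD : 0 < Real.log D := Real.log_pos (by exact_mod_cast hD)
  obtain ⟨C, hC0, hC⟩ := exists_le_count_isFreeBlock (sub_pos.2 ((div_lt_one hlogD).2 hlog))
  obtain ⟨e, he⟩ := exists_block_family (D := D) (blockOnes_le (L := L) hf) fun i hi => by
    have hmean : blockMean α β t i = t := if_pos hi
    have h := blockOnes_eq (L := L) hf i
    rw [hmean] at h
    exact hchoose _ h
  have : NeZero D := ⟨by omega⟩
  refine (le_dimH_range_of_holder (Ω := ℕ → Fin D) (G := Real.ofDigits)
    (X := fun x => Real.ofDigits (blockDigits L fun i => e i (x (Nat.count IsFreeBlock i))))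
    (C := Real.exp (C * Real.log D + L * s * Real.log 2)) (Real.exp_pos _).le hs0
    ?_ fun x y => ?_).trans (dimH_mono ?_)
  · intro u hu
    obtain ⟨x, -, hx⟩ := Real.ofDigits_SurjOn (b := D) (by omega) hu
    exact ⟨x, hx⟩
  · rcases eq_or_ne x y with rfl | hxy
    · rw [sub_self, abs_zero]
      positivity
    obtain ⟨i, hi1, hi2⟩ := exists_block_of_ne hL (fun i => (he i).2.1) (fun i => (he i).2.2) hxy
    refine hi1.trans (le_trans ?_ (mul_le_mul_of_nonneg_left
      (Real.rpow_le_rpow (by positivity) hi2 hs0.le) (Real.exp_pos _).le))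
    have hD0 : (0 : ℝ) < D := by exact_mod_cast (by omega : 0 < D)
    have hDk : ((D : ℝ) ^ Nat.count IsFreeBlock i)⁻¹ =
        Real.exp (-(Nat.count IsFreeBlock i * Real.log D)) := by
      rw [Real.exp_neg, Real.exp_nat_mul, Real.exp_log hD0]
    rw [hDk, Real.rpow_def_of_pos (by positivity), ← Real.exp_add, Real.exp_le_exp, Real.log_pow,
      one_div, Real.log_inv]
    have h2 := mul_le_mul_of_nonneg_right (hC i) hlogD.le
    have h3 : (1 - (1 - s * (L * Real.log 2) / Real.log D)) * i * Real.log D =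
        s * (L * Real.log 2) * i := by
      field_simp
      ring
    rw [sub_mul, h3] at h2
    push_cast
    linarith
  · rintro _ ⟨x, rfl⟩
    exact ofDigits_blockDigits_mem_BanachSet hα hβ ht hLt (fun i => ((he i).1 _).1)
      fun i => ((he i).1 _).2

lemma binEntropy_le_dimH_BanachSet_two {α β t : ℝ} (hα : 0 ≤ α) (hβ : β ≤ 1) (ht : t ∈ Icc α β) :
    ENNReal.ofReal (binEntropy t) ≤ dimH (BanachSet 2 α β) := by
  rcases (hα.trans ht.1).eq_or_lt with rfl | h0
  · simp [binEntropy]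
  rcases (ht.2.trans hβ).eq_or_lt with rfl | h1
  · simp [binEntropy]
  refine le_of_forall_lt fun c hc => ?_
  obtain ⟨s, hs, hcs⟩ : ∃ s, s < binEntropy t ∧ c < ENNReal.ofReal s := by
    have hcont := ENNReal.continuous_ofReal.tendsto (binEntropy t)
    exact (((hcont.mono_left nhdsWithin_le_nhds).eventually_const_lt hc).and
      self_mem_nhdsWithin : ∀ᶠ s in nhdsWithin (binEntropy t) (Iio (binEntropy t)), _).exists.imp
        fun s h => ⟨h.2, h.1⟩
  exact hcs.trans_le (le_dimH_BanachSet_two hα hβ ht h0 h1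
    (ENNReal.ofReal_pos.1 (pos_of_gt hcs)) hs)

/-- For `p = 2` and `0 ≤ α ≤ β ≤ 1`,
`dim_H B(α,β) = sup_{α ≤ t ≤ β} h₂(t)`; in particular `dim_H B(γ) = h₂(γ)` for
`0 ≤ γ ≤ 1`. -/
theorem dimH_BanachSet_two (α β : ℝ) (hα : 0 ≤ α) (hαβ : α ≤ β) (hβ : β ≤ 1) :
    dimH (BanachSet 2 α β) = ENNReal.ofReal (⨆ t ∈ Icc α β, binEntropy t) ∧
    ∀ γ : ℝ, 0 ≤ γ → γ ≤ 1 → dimH (BanachSet 2 γ γ) = ENNReal.ofReal (binEntropy γ) := by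
  refine ⟨le_antisymm ?_ ?_, fun γ h0 h1 => le_antisymm ?_
    (binEntropy_le_dimH_BanachSet_two h0 h1 ⟨le_rfl, le_rfl⟩)⟩
  · obtain ⟨t, ht, hle⟩ := exists_dimH_BanachSet_two_le hα hαβ hβ
    refine hle.trans (ENNReal.ofReal_le_ofReal ?_)
    have hbdd : BddAbove (range fun t => ⨆ _ : t ∈ Icc α β, binEntropy t) := by
      refine ⟨1, ?_⟩
      rintro _ ⟨u, rfl⟩
      exact Real.iSup_le (fun _ => binEntropy_le_one u) zero_le_one
    exact (ciSup_pos (f := fun _ : t ∈ Icc α β => binEntropy t) ht).symm.le.trans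
      (le_ciSup hbdd t)
  · have htop : dimH (BanachSet 2 α β) ≠ ⊤ :=
      ((dimH_mono (subset_univ _)).trans_lt (Real.dimH_univ ▸ ENNReal.one_lt_top)).ne
    refine ENNReal.ofReal_le_of_le_toReal (Real.iSup_le (fun t => Real.iSup_le (fun ht => ?_)
      ENNReal.toReal_nonneg) ENNReal.toReal_nonneg)
    exact (ENNReal.ofReal_le_iff_le_toReal htop).1 (binEntropy_le_dimH_BanachSet_two hα hβ ht)
  · obtain ⟨t, ht, hle⟩ := exists_dimH_BanachSet_two_le h0 le_rfl h1
    rwa [le_antisymm ht.2 ht.1] at hle
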